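/- Suppose the covariate X satisfies Assumption 1 and the noise ξ satisfies Assumption 2(a), and let f(β) = ρ_{Q,τ}(Y − ⟨X, β⟩) be the single-observation quantile loss with Y = ⟨X, β*⟩ + ξ. Then for any fixed β ∈ R^d: (i) E[f(β) − f(β*)] ≥ √(C_l/(2π)) ‖β − β*‖_2 − γ; and (ii) E[f(β) − f(β*)] ≥ (C_l/(12 b_0)) ‖β − β*‖_2² whenever ‖β − β*‖_2 ≤ C_u^{−1/2} γ. -/

import Mathlib

open MeasureTheory ProbabilityTheory

noncomputable section

/-- The quantile (check) loss `ρ_{Q,τ}(x) = τ x 1{x ≥ 0} + (τ−1) x 1{x < 0}`. -/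
def qloss (τ x : ℝ) : ℝ := if 0 ≤ x then τ * x else (τ - 1) * x

/-- The quadratic form `v ↦ vᵀ Σ v` of a matrix on Euclidean space. -/
def quadForm {d : ℕ} (S : Matrix (Fin d) (Fin d) ℝ) (v : EuclideanSpace ℝ (Fin d)) : ℝ :=
  dotProduct (fun i => v i) (S.mulVec fun i => v i)

/-! Put `Z = ⟨X, β − β*⟩`, a centred Gaussian variable of variance `v` with
`C_l ‖β − β*‖² ≤ v ≤ C_u ‖β − β*‖²`; the excess loss is `ρ(ξ − Z) − ρ(ξ)`.

For (i), `ρ(ξ − Z) − ρ(ξ) ≥ |Z|/2 − (τ − 1/2) Z − |ξ|`, where `E Z = 0` and `E|Z| = √(2v/π)`.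

For (ii), Knight's identity expands the excess loss into terms linear in `Z`, which have mean zero
because `P(ξ ≤ 0 | X) = τ`, and nonnegative terms, one of which is `(Z − ξ)₊` on `{ξ > 0}`. By
Fubini its mean is `∫ P(0 < ξ ≤ s < Z) ds`. The density bound gives `P(0 < ξ ≤ s | X) ≥ s / b₀`,
and with `σ = √v` the Gaussian tail satisfies `P(Z > s) ≥ 1/2 − s/(2σ)`, so this mean is at least
`b₀⁻¹ ∫₀^σ s (1/2 − s/(2σ)) ds = σ²/(12 b₀)`. -/

open Set
open scoped NNReal

theorem qloss_eq (τ x : ℝ) : qloss τ x = (τ - 1 / 2) * x + |x| / 2 := by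
  unfold qloss
  split_ifs with hx
  · rw [abs_of_nonneg hx]; ring
  · rw [abs_of_neg (not_le.mp hx)]; ring

theorem abs_div_two_sub_le_qloss_sub_qloss (τ x z : ℝ) :
    |z| / 2 - (τ - 1 / 2) * z - |x| ≤ qloss τ (x - z) - qloss τ x := by
  have := abs_sub_abs_le_abs_sub z x
  rw [qloss_eq, qloss_eq, abs_sub_comm x z]
  linarith

theorem qloss_sub_qloss_eq_knight (τ x z : ℝ) :
    qloss τ (x - z) - qloss τ x =
      (if x ≤ 0 then z + max (x - z) 0 else max (z - x) 0) - τ * z := by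
  unfold qloss
  rcases max_cases (x - z) 0 with h | h <;> rcases max_cases (z - x) 0 with h' | h' <;>
    rw [h.1, h'.1] <;> split_ifs <;> grind

section Fubini

variable {Ω : Type*} [MeasurableSpace Ω] {μ : Measure Ω} {f g : Ω → ℝ}

theorem measurableSet_between (hf : Measurable f) (hg : Measurable g) :
    MeasurableSet {p : ℝ × Ω | f p.2 ≤ p.1 ∧ p.1 < g p.2} :=
  (measurableSet_le (hf.comp measurable_snd) measurable_fst).inter
    (measurableSet_lt measurable_fst (hg.comp measurable_snd))

theorem lintegral_measure_between [SFinite μ] (hf : Measurable f) (hg : Measurable g) :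
    ∫⁻ s, μ {ω | f ω ≤ s ∧ s < g ω} = ∫⁻ ω, ENNReal.ofReal (g ω - f ω) ∂μ := by
  have hR := measurableSet_between hf hg
  calc ∫⁻ s, μ {ω | f ω ≤ s ∧ s < g ω}
      = (volume.prod μ) {p : ℝ × Ω | f p.2 ≤ p.1 ∧ p.1 < g p.2} := (Measure.prod_apply hR).symm
    _ = ∫⁻ ω, volume (Ico (f ω) (g ω)) ∂μ := Measure.prod_apply_symm hR
    _ = ∫⁻ ω, ENNReal.ofReal (g ω - f ω) ∂μ := by simp only [Real.volume_Ico]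

theorem integrable_measureReal_between [SFinite μ] (hf : Measurable f) (hg : Measurable g)
    (hfi : Integrable f μ) (hgi : Integrable g μ) :
    Integrable fun s ↦ μ.real {ω | f ω ≤ s ∧ s < g ω} := by
  refine integrable_toReal_of_lintegral_ne_top
    (measurable_measure_prodMk_left (measurableSet_between hf hg)).aemeasurable ?_
  rw [lintegral_measure_between hf hg]
  exact (hgi.sub hfi).lintegral_lt_top.ne

theorem integral_measureReal_between [IsFiniteMeasure μ] (hf : Measurable f) (hg : Measurable g) :
    ∫ s, μ.real {ω | f ω ≤ s ∧ s < g ω} = ∫ ω, max (g ω - f ω) 0 ∂μ := by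
  calc ∫ s, μ.real {ω | f ω ≤ s ∧ s < g ω}
      = (∫⁻ s, μ {ω | f ω ≤ s ∧ s < g ω}).toReal :=
        integral_toReal (measurable_measure_prodMk_left (measurableSet_between hf hg)).aemeasurable
          (.of_forall fun _ ↦ measure_lt_top _ _)
    _ = (∫⁻ ω, ENNReal.ofReal (max (g ω - f ω) 0) ∂μ).toReal := by
        simp only [lintegral_measure_between hf hg, ENNReal.ofReal_max, ENNReal.ofReal_zero,
          zero_le, sup_of_le_left]
    _ = ∫ ω, max (g ω - f ω) 0 ∂μ := by
        rw [integral_eq_lintegral_of_nonneg_ae (.of_forall fun ω ↦ le_max_right (g ω - f ω) 0)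
          (by fun_prop)]

end Fubini

section Gaussian

theorem measureReal_Icc_neg_eq (ν : Measure ℝ) [IsProbabilityMeasure ν]
    (hν : ν.map (fun x ↦ -x) = ν) {s : ℝ} (hs : 0 ≤ s) :
    ν.real (Icc (-s) s) = 1 - 2 * ν.real (Ioi s) := by
  have hIio : ν.real (Iio (-s)) = ν.real (Ioi s) := by
    conv_rhs => rw [← hν, map_measureReal_apply measurable_neg measurableSet_Ioi]
    simp
  have hcompl : Icc (-s) s = (Iio (-s) ∪ Ioi s)ᶜ := by ext x; simp
  have hdisj : Disjoint (Iio (-s)) (Ioi s) :=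
    Set.disjoint_left.mpr fun x (hx : x < -s) (hx' : s < x) ↦ by linarith
  rw [hcompl, probReal_compl_eq_one_sub (by measurability),
    measureReal_union hdisj measurableSet_Ioi, hIio]
  ring

theorem gaussianPDFReal_le (m : ℝ) (v : ℝ≥0) (x : ℝ) :
    gaussianPDFReal m v x ≤ (√(2 * Real.pi * v))⁻¹ := by
  rw [gaussianPDFReal]
  refine mul_le_of_le_one_right (by positivity) (Real.exp_le_one_iff.mpr ?_)
  rw [neg_div]
  exact neg_nonpos.mpr (by positivity)

theorem half_sub_div_le_gaussianReal_Ioi {v : ℝ≥0} (hv : v ≠ 0) {s : ℝ} (hs : 0 ≤ s) :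
    1 / 2 - s / √(2 * Real.pi * v) ≤ (gaussianReal 0 v).real (Ioi s) := by
  have hsymm := measureReal_Icc_neg_eq (gaussianReal 0 v)
    (by simpa using gaussianReal_map_neg (μ := 0) (v := v)) hs
  have hIcc : (gaussianReal 0 v).real (Icc (-s) s) ≤ 2 * s * (√(2 * Real.pi * v))⁻¹ := by
    rw [measureReal_def, gaussianReal_apply_eq_integral 0 hv,
      ENNReal.toReal_ofReal (integral_nonneg fun _ ↦ gaussianPDFReal_nonneg _ _ _)]
    calc ∫ x in Icc (-s) s, gaussianPDFReal 0 v x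
        ≤ ∫ x in Icc (-s) s, (√(2 * Real.pi * v))⁻¹ :=
          integral_mono (integrable_gaussianPDFReal 0 v).integrableOn (integrable_const _)
            (gaussianPDFReal_le 0 v)
      _ = 2 * s * (√(2 * Real.pi * v))⁻¹ := by
          rw [setIntegral_const, Real.volume_real_Icc_of_le (by linarith), smul_eq_mul]; ring
  rw [div_eq_mul_inv s]
  linarith

theorem div_twelve_le_integral_mul_gaussianReal_Ioi (v : ℝ≥0) :
    v / 12 ≤ ∫ s in (0 : ℝ)..√v, s * (gaussianReal 0 v).real (Ioi s) := by
  rcases eq_or_ne v 0 with rfl | hv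
  · simp
  have hσ : 0 < √(v : ℝ) := by positivity
  have htail : ∀ s ∈ Icc 0 √(v : ℝ),
      s * (1 / 2 - s / (2 * √v)) ≤ s * (gaussianReal 0 v).real (Ioi s) := by
    intro s hs
    refine mul_le_mul_of_nonneg_left
      (le_trans ?_ (half_sub_div_le_gaussianReal_Ioi hv hs.1)) hs.1
    have : 2 * √v ≤ √(2 * Real.pi * v) := by
      refine Real.le_sqrt_of_sq_le ?_
      rw [mul_pow, Real.sq_sqrt v.coe_nonneg]
      nlinarith [Real.pi_gt_three, v.coe_nonneg]
    have := hs.1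
    gcongr
  have hanti : AntitoneOn (fun s ↦ (gaussianReal 0 v).real (Ioi s)) (uIcc 0 √(v : ℝ)) :=
    fun s _ t _ hst ↦ measureReal_mono (Ioi_subset_Ioi hst)
  calc (v : ℝ) / 12 = ∫ s in (0 : ℝ)..√v, s * (1 / 2 - s / (2 * √v)) := by
        have : ∀ s : ℝ, s * (1 / 2 - s / (2 * √v)) = 1 / 2 * s - (2 * √v)⁻¹ * s ^ 2 := fun s ↦ by
          ring
        simp only [this]
        rw [intervalIntegral.integral_sub (Continuous.intervalIntegrable (by fun_prop) _ _)
          (Continuous.intervalIntegrable (by fun_prop) _ _),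
          intervalIntegral.integral_const_mul, intervalIntegral.integral_const_mul, integral_id,
          integral_pow]
        field_simp
        linear_combination -12 * √(v : ℝ) * Real.sq_sqrt v.coe_nonneg
    _ ≤ _ := intervalIntegral.integral_mono_on hσ.le
        (Continuous.intervalIntegrable (by fun_prop) _ _)
        (hanti.intervalIntegrable.continuousOn_mul continuousOn_id) htail

theorem integral_abs_gaussianReal (v : ℝ≥0) : ∫ x, |x| ∂gaussianReal 0 v = √(2 * v / Real.pi) := by
  rcases eq_or_ne v 0 with rfl | hv
  · simp
  have hpdf (x : ℝ) : gaussianPDFReal 0 v x • |x| = (√(2 * Real.pi * v))⁻¹ *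
      (|x| ^ (1 : ℝ) * Real.exp (-(2 * (v : ℝ))⁻¹ * |x| ^ (2 : ℝ))) := by
    rw [gaussianPDFReal, smul_eq_mul, Real.rpow_one, Real.rpow_two, sq_abs, sub_zero, neg_div,
      div_eq_inv_mul, neg_mul]
    ring
  have hmoment :
      ∫ y in Ioi (0 : ℝ), y ^ (1 : ℝ) * Real.exp (-(2 * (v : ℝ))⁻¹ * y ^ (2 : ℝ)) = v := by
    rw [integral_rpow_mul_exp_neg_mul_rpow (by norm_num) (by norm_num) (by positivity)]
    norm_num [Real.rpow_neg_one]
    ring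
  rw [integral_gaussianReal_eq_integral_smul hv]
  simp only [hpdf]
  rw [integral_const_mul, integral_comp_abs
    (f := fun y ↦ y ^ (1 : ℝ) * Real.exp (-(2 * (v : ℝ))⁻¹ * y ^ (2 : ℝ))), hmoment]
  have : (2 : ℝ) * v / Real.pi = (2 * v) ^ 2 / (2 * Real.pi * v) := by field_simp
  rw [this, Real.sqrt_div (by positivity), Real.sqrt_sq (by positivity)]
  ring

end Gaussian

section CondCDF

variable {Ω E : Type*} [MeasurableSpace Ω] [MeasurableSpace E] {μ : Measure Ω} {X : Ω → E}
  {ξ : Ω → ℝ} {H : E → ℝ → ℝ}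

/-- `H x s` is a version of the conditional probability `ℙ(ξ ≤ s | X = x)`, in the sense that it
integrates to the joint probabilities. No measurability in `x` is required: where `H · s` is not
integrable, the right-hand side is the junk value `0`. -/
def IsCondCDF (μ : Measure Ω) (X : Ω → E) (ξ : Ω → ℝ) (H : E → ℝ → ℝ) : Prop :=
  ∀ (s : ℝ) (B : Set E), MeasurableSet B →
    μ.real {ω | X ω ∈ B ∧ ξ ω ≤ s} = ∫ x in B, H x s ∂μ.map X

namespace IsCondCDF

theorem measureReal_eq_mul (hH : IsCondCDF μ X ξ H) (hX : Measurable X) {s p : ℝ}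
    (hs : ∀ x, H x s = p) {B : Set E} (hB : MeasurableSet B) :
    μ.real {ω | X ω ∈ B ∧ ξ ω ≤ s} = p * μ.real (X ⁻¹' B) := by
  rw [hH s B hB]
  simp only [hs]
  rw [setIntegral_const, smul_eq_mul, mul_comm, map_measureReal_apply hX hB]

theorem map_restrict_le_eq_smul [IsFiniteMeasure μ] (hH : IsCondCDF μ X ξ H) (hX : Measurable X)
    {s p : ℝ} (hp : 0 ≤ p) (hs : ∀ x, H x s = p) :
    (μ.restrict {ω | ξ ω ≤ s}).map X = ENNReal.ofReal p • μ.map X := by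
  ext B hB
  rw [Measure.map_apply hX hB, Measure.restrict_apply (hX hB), Measure.smul_apply,
    Measure.map_apply hX hB, smul_eq_mul, ← ofReal_measureReal, ← ofReal_measureReal,
    ← ENNReal.ofReal_mul hp, ← hH.measureReal_eq_mul hX hs hB]
  rfl

theorem setIntegral_comp_eq_mul [IsFiniteMeasure μ] (hH : IsCondCDF μ X ξ H) (hX : Measurable X)
    {s p : ℝ} (hp : 0 ≤ p) (hs : ∀ x, H x s = p) {g : E → ℝ} (hg : Measurable g) :
    ∫ ω in {ω | ξ ω ≤ s}, g (X ω) ∂μ = p * ∫ ω, g (X ω) ∂μ := by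
  rw [← integral_map hX.aemeasurable hg.aestronglyMeasurable,
    hH.map_restrict_le_eq_smul hX hp hs, integral_smul_measure, ENNReal.toReal_ofReal hp,
    integral_map hX.aemeasurable hg.aestronglyMeasurable, smul_eq_mul]

theorem mul_measureReal_le [IsFiniteMeasure μ] (hH : IsCondCDF μ X ξ H) (hX : Measurable X)
    (hξ : Measurable ξ) {s t p c : ℝ} (hst : s ≤ t) (hp : 0 < p) (hs : ∀ x, H x s = p)
    (ht : ∀ x, p + c ≤ H x t) {B : Set E} (hB : MeasurableSet B) :
    c * μ.real (X ⁻¹' B) ≤ μ.real {ω | X ω ∈ B ∧ s < ξ ω ∧ ξ ω ≤ t} := by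
  have hsub : {ω | X ω ∈ B ∧ ξ ω ≤ s} ⊆ {ω | X ω ∈ B ∧ ξ ω ≤ t} :=
    fun ω hω ↦ ⟨hω.1, hω.2.trans hst⟩
  have hps := hH.measureReal_eq_mul hX hs hB
  by_cases hint : IntegrableOn (fun x ↦ H x t) B (μ.map X)
  · have hpt : (p + c) * μ.real (X ⁻¹' B) ≤ μ.real {ω | X ω ∈ B ∧ ξ ω ≤ t} := by
      rw [hH t B hB]
      calc (p + c) * μ.real (X ⁻¹' B) = ∫ _ in B, (p + c) ∂μ.map X := by
            rw [setIntegral_const, smul_eq_mul, mul_comm, map_measureReal_apply hX hB]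
        _ ≤ ∫ x in B, H x t ∂μ.map X := integral_mono (integrable_const _) hint ht
    have hdiff : {ω | X ω ∈ B ∧ s < ξ ω ∧ ξ ω ≤ t} =
        {ω | X ω ∈ B ∧ ξ ω ≤ t} \ {ω | X ω ∈ B ∧ ξ ω ≤ s} := by
      ext ω; simp only [mem_ofPred_eq, mem_sdiff]; grind
    rw [hdiff, measureReal_sdiff hsub ((hX hB).inter (measurableSet_le hξ measurable_const)), hps]
    linarith
  · -- The junk value `0` of `∫ x in B, H x t` forces `X ∈ B` to be a null event.
    have hzero : p * μ.real (X ⁻¹' B) ≤ 0 := by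
      rw [← hps, ← integral_undef hint, ← hH t B hB]
      exact measureReal_mono hsub
    have hnull : μ.real (X ⁻¹' B) = 0 :=
      le_antisymm (nonpos_of_mul_nonpos_right hzero hp) measureReal_nonneg
    rw [hnull, mul_zero]
    exact measureReal_nonneg

end IsCondCDF

end CondCDF

theorem mul_sub_le_sub_of_le_hasDerivAt {f f' : ℝ → ℝ} {a b c : ℝ} (hab : a ≤ b)
    (hf : ∀ x ∈ Icc a b, HasDerivAt f (f' x) x) (hc : ∀ x ∈ Ioo a b, c ≤ f' x) :
    c * (b - a) ≤ f b - f a := by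
  refine (convex_Icc a b).mul_sub_le_image_sub_of_le_deriv
    (fun x hx ↦ (hf x hx).continuousAt.continuousWithinAt)
    (fun x hx ↦ (hf x (interior_subset hx)).differentiableAt.differentiableWithinAt)
    (fun x hx ↦ ?_) a (left_mem_Icc.mpr hab) b (right_mem_Icc.mpr hab) hab
  rw [(hf x (interior_subset hx)).deriv]
  exact hc x (by rwa [interior_Icc] at hx)

theorem sqrt_le_sqrt_div_mul_of_le_div_sqrt {a b r v t : ℝ} (ha : 0 < a) (hb : 0 < b)
    (hr : 0 ≤ r) (hva : a * r ^ 2 ≤ v) (hvb : v ≤ b * r ^ 2) (hrt : r ≤ t / √b) :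
    √v ≤ √(b / a) * t := by
  have hv : v ≤ b / a * (b * r ^ 2) := by
    rw [div_mul_eq_mul_div, le_div_iff₀ ha]
    calc v * a ≤ b * r ^ 2 * a := by gcongr
      _ = b * (a * r ^ 2) := by ring
      _ ≤ b * (b * r ^ 2) := mul_le_mul_of_nonneg_left (hva.trans hvb) hb.le
  calc √v ≤ √(b / a * (b * r ^ 2)) := Real.sqrt_le_sqrt hv
    _ = √(b / a) * (r * √b) := by
      rw [Real.sqrt_mul (by positivity), Real.sqrt_mul hb.le, Real.sqrt_sq hr, mul_comm r]
    _ ≤ √(b / a) * t := by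
      gcongr
      exact (le_div_iff₀ (Real.sqrt_pos.mpr hb)).mp hrt

section ExcessRisk

variable {Ω E : Type*} [MeasurableSpace Ω] [MeasurableSpace E] {μ : Measure Ω} {X : Ω → E}
  {ξ Z : Ω → ℝ} {g : E → ℝ} {H : E → ℝ → ℝ} {τ : ℝ}

/-- The expected excess quantile loss `E[ρ_{Q,τ}(ξ − Z) − ρ_{Q,τ}(ξ)]` of a predictor that
overshoots the true conditional quantile by `Z`, where `ξ` is the noise. -/
def excessRisk (τ : ℝ) (μ : Measure Ω) (ξ Z : Ω → ℝ) : ℝ :=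
  ∫ ω, (qloss τ (ξ ω - Z ω) - qloss τ (ξ ω)) ∂μ

theorem integrable_qloss (τ : ℝ) (hξ : Integrable ξ μ) : Integrable (fun ω ↦ qloss τ (ξ ω)) μ := by
  simp only [qloss_eq]
  exact (hξ.const_mul _).add (hξ.abs.div_const _)

theorem integrable_qloss_sub_qloss (τ : ℝ) (hξ : Integrable ξ μ) (hZ : Integrable Z μ) :
    Integrable (fun ω ↦ qloss τ (ξ ω - Z ω) - qloss τ (ξ ω)) μ :=
  (integrable_qloss τ (hξ.sub hZ)).sub (integrable_qloss τ hξ)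

theorem integral_abs_sub_le_excessRisk (τ : ℝ) (hξ : Integrable ξ μ) (hZ : Integrable Z μ)
    (hZ0 : ∫ ω, Z ω ∂μ = 0) :
    (∫ ω, |Z ω| ∂μ) / 2 - ∫ ω, |ξ ω| ∂μ ≤ excessRisk τ μ ξ Z := by
  have hZabs : Integrable (fun ω ↦ |Z ω| / 2) μ := hZ.abs.div_const _
  have hZτ : Integrable (fun ω ↦ (τ - 1 / 2) * Z ω) μ := hZ.const_mul _
  have hlin : Integrable (fun ω ↦ |Z ω| / 2 - (τ - 1 / 2) * Z ω) μ := hZabs.sub hZτ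
  calc (∫ ω, |Z ω| ∂μ) / 2 - ∫ ω, |ξ ω| ∂μ
      = ∫ ω, (|Z ω| / 2 - (τ - 1 / 2) * Z ω - |ξ ω|) ∂μ := by
        rw [integral_sub hlin hξ.abs, integral_sub hZabs hZτ, integral_div,
          integral_const_mul, hZ0, mul_zero, sub_zero]
    _ ≤ excessRisk τ μ ξ Z :=
        integral_mono (hlin.sub hξ.abs) (integrable_qloss_sub_qloss τ hξ hZ)
          fun ω ↦ abs_div_two_sub_le_qloss_sub_qloss τ (ξ ω) (Z ω)

theorem setIntegral_max_sub_le_excessRisk (τ : ℝ) (hξm : Measurable ξ) (hξ : Integrable ξ μ)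
    (hZ : Integrable Z μ) (hZ0 : ∫ ω, Z ω ∂μ = 0) (hZneg : ∫ ω in {ω | ξ ω ≤ 0}, Z ω ∂μ = 0) :
    ∫ ω in {ω | 0 < ξ ω}, max (Z ω - ξ ω) 0 ∂μ ≤ excessRisk τ μ ξ Z := by
  have hneg : MeasurableSet {ω | ξ ω ≤ 0} := measurableSet_le hξm measurable_const
  have hpos : MeasurableSet {ω | 0 < ξ ω} := measurableSet_lt measurable_const hξm
  have hind := hZ.indicator hneg
  have hmax : Integrable ({ω | 0 < ξ ω}.indicator fun ω ↦ max (Z ω - ξ ω) 0) μ :=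
    (hZ.sub hξ).pos_part.indicator hpos
  have hsum : Integrable (fun ω ↦ {ω | ξ ω ≤ 0}.indicator Z ω +
      {ω | 0 < ξ ω}.indicator (fun ω ↦ max (Z ω - ξ ω) 0) ω) μ := hind.add hmax
  have hZτ := hZ.const_mul τ
  calc ∫ ω in {ω | 0 < ξ ω}, max (Z ω - ξ ω) 0 ∂μ
      = ∫ ω, ({ω | ξ ω ≤ 0}.indicator Z ω
          + {ω | 0 < ξ ω}.indicator (fun ω ↦ max (Z ω - ξ ω) 0) ω - τ * Z ω) ∂μ := by
        rw [integral_sub hsum hZτ, integral_add hind hmax, integral_indicator hneg,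
          integral_indicator hpos, integral_const_mul, hZ0, hZneg]
        ring
    _ ≤ excessRisk τ μ ξ Z := by
        refine integral_mono (hsum.sub hZτ) (integrable_qloss_sub_qloss τ hξ hZ)
          fun ω ↦ ?_
        simp only [qloss_sub_qloss_eq_knight, indicator, mem_ofPred_eq]
        have := le_max_right (ξ ω - Z ω) 0
        split_ifs <;> linarith

theorem mul_integral_measureReal_lt_le_excessRisk [IsFiniteMeasure μ] (hX : Measurable X)
    (hξm : Measurable ξ) (hξ : Integrable ξ μ) (hg : Measurable g)
    (hgX : Integrable (fun ω ↦ g (X ω)) μ) (hg0 : ∫ ω, g (X ω) ∂μ = 0)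
    (hH : IsCondCDF μ X ξ H) (hτ : 0 < τ) (hH0 : ∀ x, H x 0 = τ) {a c : ℝ} (ha : 0 ≤ a)
    (hc : 0 ≤ c) (hHs : ∀ s ∈ Ioc 0 a, ∀ x, τ + c * s ≤ H x s) :
    c * ∫ s in (0 : ℝ)..a, s * μ.real {ω | s < g (X ω)} ≤ excessRisk τ μ ξ fun ω ↦ g (X ω) := by
  set A := {ω | 0 < ξ ω}
  have hslab : ∀ s ∈ Ioc 0 a, c * (s * μ.real {ω | s < g (X ω)}) ≤
      (μ.restrict A).real {ω | ξ ω ≤ s ∧ s < g (X ω)} := by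
    intro s hs
    have hmeas : MeasurableSet {ω | ξ ω ≤ s ∧ s < g (X ω)} :=
      (measurableSet_le hξm measurable_const).inter
        (measurableSet_lt measurable_const (hg.comp hX))
    rw [← mul_assoc, measureReal_restrict_apply hmeas]
    refine (hH.mul_measureReal_le hX hξm hs.1.le hτ hH0 (hHs s hs)
      (measurableSet_lt measurable_const hg)).trans (measureReal_mono ?_)
    exact fun ω hω ↦ ⟨⟨hω.2.2, hω.1⟩, hω.2.1⟩
  have hgap := integrable_measureReal_between (μ := μ.restrict A) hξm (hg.comp hX)
    hξ.integrableOn hgX.integrableOn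
  calc c * ∫ s in (0 : ℝ)..a, s * μ.real {ω | s < g (X ω)}
      = ∫ s in Ioc 0 a, c * (s * μ.real {ω | s < g (X ω)}) := by
        rw [intervalIntegral.integral_of_le ha, integral_const_mul]
    _ ≤ ∫ s in Ioc 0 a, (μ.restrict A).real {ω | ξ ω ≤ s ∧ s < g (X ω)} := by
        refine integral_mono_of_nonneg ?_ hgap.integrableOn ?_
        · filter_upwards [ae_restrict_mem measurableSet_Ioc] with s hs
          exact mul_nonneg hc (mul_nonneg hs.1.le measureReal_nonneg)
        · filter_upwards [ae_restrict_mem measurableSet_Ioc] with s hs using hslab s hs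
    _ ≤ ∫ s, (μ.restrict A).real {ω | ξ ω ≤ s ∧ s < g (X ω)} :=
        setIntegral_le_integral hgap (.of_forall fun _ ↦ measureReal_nonneg)
    _ = ∫ ω in A, max (g (X ω) - ξ ω) 0 ∂μ := integral_measureReal_between hξm (hg.comp hX)
    _ ≤ excessRisk τ μ ξ fun ω ↦ g (X ω) := by
        refine setIntegral_max_sub_le_excessRisk τ hξm hξ hgX hg0 ?_
        rw [hH.setIntegral_comp_eq_mul hX hτ.le hH0 hg, hg0, mul_zero]

theorem sqrt_div_sub_le_excessRisk_of_gaussianReal (τ : ℝ) {v : ℝ≥0} (hξ : Integrable ξ μ)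
    (hZ : HasLaw Z (gaussianReal 0 v) μ) :
    √(v / (2 * Real.pi)) - ∫ ω, |ξ ω| ∂μ ≤ excessRisk τ μ ξ Z := by
  have hZabs : ∫ ω, |Z ω| ∂μ = √(2 * v / Real.pi) := by
    rw [← integral_abs_gaussianReal]
    exact hZ.integral_comp (f := fun x ↦ |x|) (by fun_prop)
  have hhalf : √(2 * v / Real.pi) / 2 = √(v / (2 * Real.pi)) := by
    rw [eq_comm, Real.sqrt_eq_iff_mul_self_eq (by positivity) (by positivity),
      div_mul_div_comm, Real.mul_self_sqrt (by positivity)]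
    field_simp
  rw [← hhalf, ← hZabs]
  exact integral_abs_sub_le_excessRisk τ hξ hZ.hasGaussianLaw.integrable
    (by rw [hZ.integral_eq, integral_id_gaussianReal])

theorem mul_div_twelve_le_excessRisk_of_gaussianReal {v : ℝ≥0}
    (hX : Measurable X) (hξm : Measurable ξ) (hξ : Integrable ξ μ) (hg : Measurable g)
    (hgX : HasLaw (fun ω ↦ g (X ω)) (gaussianReal 0 v) μ) (hH : IsCondCDF μ X ξ H) (hτ : 0 < τ)
    (hH0 : ∀ x, H x 0 = τ) {c : ℝ} (hc : 0 ≤ c)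
    (hHs : ∀ s ∈ Ioc 0 √(v : ℝ), ∀ x, τ + c * s ≤ H x s) :
    c * (v / 12) ≤ excessRisk τ μ ξ fun ω ↦ g (X ω) := by
  have := hgX.isFiniteMeasure
  have htail (s : ℝ) : μ.real {ω | s < g (X ω)} = (gaussianReal 0 v).real (Ioi s) :=
    hgX.measureReal_eq measurableSet_Ioi
  calc c * (v / 12) ≤ c * ∫ s in (0 : ℝ)..√v, s * μ.real {ω | s < g (X ω)} := by
        simp only [htail]
        exact mul_le_mul_of_nonneg_left (div_twelve_le_integral_mul_gaussianReal_Ioi v) hc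
    _ ≤ excessRisk τ μ ξ fun ω ↦ g (X ω) :=
        mul_integral_measureReal_lt_le_excessRisk hX hξm hξ hg
          hgX.hasGaussianLaw.integrable
          (by rw [hgX.integral_eq, integral_id_gaussianReal]) hH hτ hH0 (Real.sqrt_nonneg _) hc hHs

end ExcessRisk

theorem stmt_12_general {E Ω : Type*} [MeasurableSpace E] [MeasurableSpace Ω]
    {μ : Measure Ω} {τ Cl Cu b0 r : ℝ} (hτ : 0 < τ) (hCl : 0 < Cl)
    (hCu : 0 < Cu) (hb0 : 0 < b0) (hr : 0 ≤ r) {v : ℝ≥0} (hvl : Cl * r ^ 2 ≤ v)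
    (hvu : v ≤ Cu * r ^ 2) {X : Ω → E} {ξ : Ω → ℝ} (hX : Measurable X) (hξm : Measurable ξ)
    (hξ : Integrable ξ μ) {g : E → ℝ} (hg : Measurable g)
    (hgX : HasLaw (fun ω ↦ g (X ω)) (gaussianReal 0 v) μ) {H h : E → ℝ → ℝ}
    (hH : IsCondCDF μ X ξ H) (hH0 : ∀ x, H x 0 = τ)
    (hderiv : ∀ x, ∀ s ∈ Icc 0 (√(Cu / Cl) * ∫ ω, |ξ ω| ∂μ), HasDerivAt (H x) (h x s) s)
    (hdens : ∀ x, ∀ s ∈ Icc 0 (√(Cu / Cl) * ∫ ω, |ξ ω| ∂μ), 1 / b0 ≤ h x s) :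
    √(Cl / (2 * Real.pi)) * r - ∫ ω, |ξ ω| ∂μ ≤ excessRisk τ μ ξ (fun ω ↦ g (X ω)) ∧
    (r ≤ (∫ ω, |ξ ω| ∂μ) / √Cu →
      Cl / (12 * b0) * r ^ 2 ≤ excessRisk τ μ ξ (fun ω ↦ g (X ω))) := by
  constructor
  · have : √(Cl / (2 * Real.pi)) * r ≤ √(v / (2 * Real.pi)) := by
      rw [← Real.sqrt_sq hr, ← Real.sqrt_mul' _ (sq_nonneg r), div_mul_eq_mul_div]
      gcongr
    linarith [sqrt_div_sub_le_excessRisk_of_gaussianReal τ hξ hgX]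
  · intro hrγ
    have hσγ := sqrt_le_sqrt_div_mul_of_le_div_sqrt hCl hCu hr hvl hvu hrγ
    have hgrowth : ∀ s ∈ Ioc 0 √(v : ℝ), ∀ x, τ + 1 / b0 * s ≤ H x s := by
      intro s hs x
      have hsub : Icc 0 s ⊆ Icc 0 (√(Cu / Cl) * ∫ ω, |ξ ω| ∂μ) :=
        Icc_subset_Icc_right (hs.2.trans hσγ)
      have := mul_sub_le_sub_of_le_hasDerivAt hs.1.le (fun t ht ↦ hderiv x t (hsub ht))
        (fun t ht ↦ hdens x t (hsub (Ioo_subset_Icc_self ht)))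
      rw [hH0 x] at this
      linarith
    calc Cl / (12 * b0) * r ^ 2 = 1 / b0 * (Cl * r ^ 2 / 12) := by field_simp
      _ ≤ 1 / b0 * (v / 12) := by gcongr
      _ ≤ excessRisk τ μ ξ (fun ω ↦ g (X ω)) :=
        mul_div_twelve_le_excessRisk_of_gaussianReal hX hξm hξ hg hgX hH hτ hH0 (by positivity)
          hgrowth

/-- **Lower bounds on the expected excess quantile risk of a single observation.**
Under Assumption 1 on `X` and Assumption 2(a) on the noise `ξ` (conditional CDF `H` with
`H(x)(0) = τ`, conditional density `h = H'` bounded below by `1/b₀` on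
`|s| ≤ 8√(C_u/C_l) γ`, where `γ = E|ξ|`), for `f(β) = ρ_{Q,τ}(Y − ⟨X, β⟩)` with
`Y = ⟨X, β*⟩ + ξ`:
(i)  `E[f(β) − f(β*)] ≥ √(C_l/(2π)) ‖β − β*‖ − γ`, and
(ii) `E[f(β) − f(β*)] ≥ (C_l/(12 b₀)) ‖β − β*‖²` whenever `‖β − β*‖ ≤ γ/√C_u`. -/
theorem stmt_12 {d : ℕ} {Ω : Type*} [MeasurableSpace Ω]
    (μ : Measure Ω) [IsProbabilityMeasure μ]
    (τ Cl Cu b0 γ : ℝ) (hτ : τ ∈ Set.Ioo (0 : ℝ) 1)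
    (hCl : 0 < Cl) (hCu : 0 < Cu) (hb0 : 0 < b0)
    (S : Matrix (Fin d) (Fin d) ℝ) (hSsymm : S.IsSymm) (hSpd : S.PosDef)
    (hquad : ∀ v : EuclideanSpace ℝ (Fin d),
      Cl * ‖v‖ ^ 2 ≤ quadForm S v ∧ quadForm S v ≤ Cu * ‖v‖ ^ 2)
    (X : Ω → EuclideanSpace ℝ (Fin d)) (ξ : Ω → ℝ)
    (hXmeas : Measurable X) (hξmeas : Measurable ξ)
    (hX : ∀ v : EuclideanSpace ℝ (Fin d),
      Measure.map (fun ω => (inner ℝ v (X ω) : ℝ)) μ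
        = gaussianReal 0 (Real.toNNReal (quadForm S v)))
    -- conditional CDF `H` and conditional density `hdens` of `ξ` given `X`
    (H hdens : EuclideanSpace ℝ (Fin d) → ℝ → ℝ)
    (hcond : ∀ (s : ℝ) (B : Set (EuclideanSpace ℝ (Fin d))), MeasurableSet B →
      (μ {ω | X ω ∈ B ∧ ξ ω ≤ s}).toReal = ∫ x in B, H x s ∂(Measure.map X μ))
    (hH0 : ∀ x, H x 0 = τ)
    (hHderiv : ∀ x s, HasDerivAt (H x) (hdens x s) s)
    (hγint : Integrable (fun ω => |ξ ω|) μ)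
    (hγ : γ = ∫ ω, |ξ ω| ∂μ)
    (hdens_lb : ∀ x s, |s| ≤ 8 * Real.sqrt (Cu / Cl) * γ → 1 / b0 ≤ hdens x s)
    (βstar β : EuclideanSpace ℝ (Fin d)) :
    Real.sqrt (Cl / (2 * Real.pi)) * ‖β - βstar‖ - γ ≤
      ∫ ω, (qloss τ (ξ ω + (inner ℝ (X ω) (βstar - β) : ℝ)) - qloss τ (ξ ω)) ∂μ ∧
    (‖β - βstar‖ ≤ γ / Real.sqrt Cu →
      Cl / (12 * b0) * ‖β - βstar‖ ^ 2 ≤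
        ∫ ω, (qloss τ (ξ ω + (inner ℝ (X ω) (βstar - β) : ℝ)) - qloss τ (ξ ω)) ∂μ) := by
  subst hγ
  obtain ⟨hlower, hupper⟩ := hquad (β - βstar)
  have hshift (ω : Ω) : ξ ω + inner ℝ (X ω) (βstar - β) = ξ ω - inner ℝ (β - βstar) (X ω) := by
    rw [real_inner_comm, ← neg_sub β βstar, inner_neg_left, ← sub_eq_add_neg]
  have hvar : ((quadForm S (β - βstar)).toNNReal : ℝ) = quadForm S (β - βstar) :=
    Real.coe_toNNReal _ (le_trans (by positivity) hlower)
  simp only [hshift]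
  refine stmt_12_general hτ.1 hCl hCu hb0 (norm_nonneg _) (hvar.symm ▸ hlower)
    (hvar.symm ▸ hupper) hXmeas hξmeas ((integrable_norm_iff hξmeas.aestronglyMeasurable).mp hγint)
    (by fun_prop) ⟨by fun_prop, hX _⟩ hcond hH0 (fun x s _ ↦ hHderiv x s)
    fun x s hs ↦ hdens_lb x s ?_
  rw [abs_of_nonneg hs.1]
  linarith [hs.1, hs.2]
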